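/- Let G be a connected non-3-edge-colorable simple cubic graph with at most 10 vertices. Then G is isomorphic to the Petersen graph P or to the graph S' obtained from the Petersen graph structure with two triangles (the unique other connected simple cubic graph on 10 vertices with chromatic index 4 arising in this classification). -/

import Mathlib

open scoped Classical

/-- A finite undirected multigraph (possibly with loops and parallel edges),
given by a vertex type, an edge type, and an endpoints map. -/
structure Multigraph where
  V : Type
  E : Type
  [fintV : Fintype V]
  [fintE : Fintype E]
  [decV : DecidableEq V]
  [decE : DecidableEq E]
  ends : E → Sym2 V

namespace Multigraph

attribute [instance] Multigraph.fintV Multigraph.fintE Multigraph.decV Multigraph.decE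

variable (G : Multigraph)

/-- The number of times `v` occurs as an endpoint of `e` (2 for a loop at `v`). -/
def incCount (v : G.V) (e : G.E) : ℕ :=
  if G.ends e = Sym2.diag v then 2 else if v ∈ G.ends e then 1 else 0

/-- Degree of a vertex (a loop contributes 2). -/
def degree (v : G.V) : ℕ := ∑ e : G.E, G.incCount v e

/-- The set `∂_G(v)` of edges incident to `v`. -/
def star (v : G.V) : Finset G.E := Finset.univ.filter fun e => v ∈ G.ends e

/-- No loops. -/
def Loopless : Prop := ∀ e : G.E, ¬ (G.ends e).IsDiag

/-- A cubic graph: loopless and 3-regular (parallel edges allowed). -/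
def Cubic : Prop := G.Loopless ∧ ∀ v : G.V, G.degree v = 3

/-- A cubic pseudo-graph: 3-regular, loops and parallel edges allowed. -/
def CubicPseudo : Prop := ∀ v : G.V, G.degree v = 3

/-- A simple graph: no loops and no parallel edges. -/
def Simple : Prop := G.Loopless ∧ ∀ e e' : G.E, G.ends e = G.ends e' → e = e'

/-- Two edges are adjacent if they are distinct and share an endpoint. -/
def EdgeAdj (e e' : G.E) : Prop :=
  e ≠ e' ∧ ∃ v : G.V, v ∈ G.ends e ∧ v ∈ G.ends e'

/-- A matching: a set of pairwise non-adjacent edges. -/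
def IsMatching (M : Set G.E) : Prop :=
  ∀ e ∈ M, ∀ e' ∈ M, e ≠ e' → ¬ ∃ v : G.V, v ∈ G.ends e ∧ v ∈ G.ends e'

/-- A perfect matching: a matching covering every vertex. -/
def IsPerfectMatching (M : Set G.E) : Prop :=
  G.IsMatching M ∧ ∀ v : G.V, ∃ e ∈ M, v ∈ G.ends e

/-- Degree of `v` within the spanning subgraph with edge set `A`. -/
noncomputable def degIn (A : Set G.E) (v : G.V) : ℕ :=
  ∑ e : G.E, if e ∈ A then G.incCount v e else 0

/-- `A` is the edge set of a `k`-factor: a spanning `k`-regular subgraph. -/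
def IsKFactor (k : ℕ) (A : Set G.E) : Prop := ∀ v : G.V, G.degIn A v = k

/-- `A` is the edge set of an even subgraph. -/
def EvenSubgraph (A : Set G.E) : Prop := ∀ v : G.V, Even (G.degIn A v)

/-- Reachability using only edges from `A`. -/
def Reach (A : Set G.E) : G.V → G.V → Prop :=
  Relation.ReflTransGen fun a b => ∃ e ∈ A, G.ends e = s(a, b)

/-- Connectedness. -/
def Connected : Prop := ∀ u v : G.V, G.Reach Set.univ u v

/-- A bridge: an edge whose removal disconnects its endpoints. -/
def IsBridge (e : G.E) : Prop :=
  ∀ u w : G.V, G.ends e = s(u, w) → ¬ G.Reach {e' | e' ≠ e} u w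

/-- The chromatic index: least number of colors of a proper edge coloring. -/
noncomputable def chromaticIndex : ℕ :=
  sInf {n | ∃ c : G.E → Fin n, ∀ e e', G.EdgeAdj e e' → c e ≠ c e'}

/-- A triangle on distinct vertices `u, v, w` with edges `e₁, e₂, e₃`. -/
def IsTriangle (e₁ e₂ e₃ : G.E) (u v w : G.V) : Prop :=
  u ≠ v ∧ v ≠ w ∧ u ≠ w ∧
    G.ends e₁ = s(u, v) ∧ G.ends e₂ = s(v, w) ∧ G.ends e₃ = s(u, w)

/-- Triangle-freeness. -/
def TriangleFree : Prop :=
  ¬ ∃ (e₁ e₂ e₃ : G.E) (u v w : G.V), G.IsTriangle e₁ e₂ e₃ u v w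

/-- An isomorphism of multigraphs. -/
structure Iso (G H : Multigraph) where
  vEquiv : G.V ≃ H.V
  eEquiv : G.E ≃ H.E
  ends_map : ∀ e : G.E, H.ends (eEquiv e) = (G.ends e).map vEquiv

/-- `G` and `H` are isomorphic. -/
def IsIsomorphicTo (G H : Multigraph) : Prop := Nonempty (Iso G H)

/-- An `H`-coloring of `G`: `f(∂_G(x)) = ∂_H(y)` for every vertex `x` of `G`,
some vertex `y` of `H`. -/
def IsHColoring (G H : Multigraph) (f : G.E → H.E) : Prop :=
  ∀ x : G.V, ∃ y : H.V, (G.star x).image f = H.star y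

/-- The set `V(f)` of vertices of `G` satisfying the `H`-coloring condition under `f`. -/
def colVerts (G H : Multigraph) (f : G.E → H.E) : Set G.V :=
  {x : G.V | ∃ y : H.V, (G.star x).image f = H.star y}

/-- The incidence multiset of a vertex: each incident edge with its multiplicity
(a loop occurs twice). -/
noncomputable def incMultiset (v : G.V) : Multiset G.E :=
  ∑ e : G.E, (G.incCount v e) • ({e} : Multiset G.E)

end Multigraph

/-- The Petersen graph. -/
def Petersen : Multigraph where
  V := Fin 10
  E := {p : Sym2 (Fin 10) //
    p ∈ ({s(0,1), s(1,2), s(2,3), s(3,4), s(4,0),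
          s(0,5), s(1,6), s(2,7), s(3,8), s(4,9),
          s(5,7), s(7,9), s(9,6), s(6,8), s(8,5)} : Finset (Sym2 (Fin 10)))}
  ends := Subtype.val

/-- The Sylvester graph `S` on 10 vertices: a central vertex 0 joined by three
bridges to three end-blocks; each end-block is a 3-vertex multigraph whose two
non-root vertices are joined by a pair of parallel edges. -/
def SylvesterS : Multigraph where
  V := Fin 10
  E := Fin 15
  ends := ![s(0,1), s(1,2), s(1,3), s(2,3), s(2,3),
            s(0,4), s(4,5), s(4,6), s(5,6), s(5,6),
            s(0,7), s(7,8), s(7,9), s(8,9), s(8,9)]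

/-- The Sylvester simple graph `S₁₆` on 16 vertices: central vertex 0 joined by
bridges to three 5-vertex end-blocks with edges
(v1,v2),(v1,v3),(v1,v4),(v2,v3),(v2,v4),(v3,v5),(v4,v5). -/
def Sylvester16 : Multigraph where
  V := Fin 16
  E := {p : Sym2 (Fin 16) //
    p ∈ ({s(1,2), s(1,3), s(1,4), s(2,3), s(2,4), s(3,5), s(4,5), s(0,5),
          s(6,7), s(6,8), s(6,9), s(7,8), s(7,9), s(8,10), s(9,10), s(0,10),
          s(11,12), s(11,13), s(11,14), s(12,13), s(12,14), s(13,15), s(14,15),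
          s(0,15)} : Finset (Sym2 (Fin 16)))}
  ends := Subtype.val

/-- The graph `S'` on 10 vertices: two 5-vertex blocks, each consisting of a
triangle v1v2v3 together with edges (v1,v4),(v2,v4),(v3,v5),(v4,v5), joined by
a bridge between the two degree-2 vertices. -/
def Sprime : Multigraph where
  V := Fin 10
  E := {p : Sym2 (Fin 10) //
    p ∈ ({s(0,1), s(0,2), s(1,2), s(0,3), s(1,3), s(2,4), s(3,4),
          s(5,6), s(5,7), s(6,7), s(5,8), s(6,8), s(7,9), s(8,9),
          s(4,9)} : Finset (Sym2 (Fin 10)))}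
  ends := Subtype.val

/-- The Sylvester pseudo-graph `S₄` on 4 vertices: a central vertex 0 joined to
vertices 1, 2, 3 (edges `a = 0`, `b = 1`, `c = 2`), each of which carries a loop
(`a' = 3`, `b' = 4`, `c' = 5`). -/
def S4 : Multigraph where
  V := Fin 4
  E := Fin 6
  ends := ![s(0,1), s(0,2), s(0,3), s(1,1), s(2,2), s(3,3)]


namespace CubicSearch

/-- The vertices joined to `v` by a pair of the list `es`. -/
def nbrs : List (ℕ × ℕ) → ℕ → List ℕ
  | [], _ => []
  | p :: es, v =>
    if p.1 = v then p.2 :: nbrs es v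
    else if p.2 = v then p.1 :: nbrs es v
    else nbrs es v

/-- Whether two colored pairs do not conflict: they have different colors or no common end. -/
def compatible (x y : (ℕ × ℕ) × ℕ) : Bool :=
  x.2 != y.2 ||
    !(x.1.1 == y.1.1 || x.1.1 == y.1.2 || x.1.2 == y.1.1 || x.1.2 == y.1.2)

/-- Backtracking search for a proper 3-edge-coloring extending a given one. -/
def colorSearch : List (ℕ × ℕ) → List ((ℕ × ℕ) × ℕ) → Bool
  | [], _ => true
  | e :: es, done =>
    [0, 1, 2].any fun c =>
      done.all (compatible (e, c)) && colorSearch es ((e, c) :: done)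

/-- Whether the partial vertex map `m` sends pairs of `es` to pairs of `t`. -/
def preserves (es t : List (ℕ × ℕ)) (m : List ℕ) : Bool :=
  es.all fun p =>
    match m[p.1]?, m[p.2]? with
    | some a, some b => t.contains (a, b) || t.contains (b, a)
    | _, _ => true

/-- Backtracking search for an injective vertex map sending pairs of `es` to pairs of `t`. -/
def mapSearch (es t : List (ℕ × ℕ)) : ℕ → List ℕ → Bool
  | 0, m => preserves es t m && m.length == 10 && m.all (· < 10) && decide m.Nodup
  | n + 1, m =>
    (List.range 10).any fun x =>
      !m.contains x &&
        (nbrs es m.length).all (fun b => (m[b]?).all fun y => (nbrs t x).contains y) &&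
        mapSearch es t n (m ++ [x])

/-- Edges of the Petersen graph. -/
def petersenPairs : List (ℕ × ℕ) :=
  [(0, 1), (1, 2), (2, 3), (3, 4), (4, 0), (0, 5), (1, 6), (2, 7), (3, 8), (4, 9),
    (5, 7), (7, 9), (9, 6), (6, 8), (8, 5)]

/-- Edges of the graph `S'`. -/
def sprimePairs : List (ℕ × ℕ) :=
  [(0, 1), (0, 2), (1, 2), (0, 3), (1, 3), (2, 4), (3, 4),
    (5, 6), (5, 7), (6, 7), (5, 8), (6, 8), (7, 9), (8, 9), (4, 9)]

/-- The check made at a completely explored graph on `k` vertices. -/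
def leafCheck (k : ℕ) (es : List (ℕ × ℕ)) : Bool :=
  colorSearch es.reverse [] ||
    (k == 10 && (mapSearch es petersenPairs 10 [] || mapSearch es sprimePairs 10 []))

/-- Exhaustive exploration of the connected cubic graphs on at most ten vertices. The vertices
found so far are `0, …, k - 1`, those below `i` have all their neighbors found, and the adjacency
of `i` with the vertices below `j` has been decided. -/
def search : ℕ → ℕ → ℕ → ℕ → List (ℕ × ℕ) → Bool
  | 0, _, _, _, _ => false
  | n + 1, k, i, j, es =>
    if i = k then leafCheck k es
    else if (nbrs es i).length = 3 then search n k (i + 1) (i + 2) es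
    else if k ≤ j then (Nat.ble 10 k || search n (k + 1) i (k + 1) ((i, k) :: es))
    else (Nat.ble 3 (nbrs es j).length || search n k i (j + 1) ((i, j) :: es)) &&
      search n k i (j + 1) es

theorem search_eq_true : search 100 1 0 1 [] = true := by
  decide +kernel

theorem mem_nbrs {es : List (ℕ × ℕ)} {a b : ℕ} :
    b ∈ nbrs es a ↔ (a, b) ∈ es ∨ (b, a) ∈ es := by
  induction es with
  | nil => simp [nbrs]
  | cons p es ih =>
    obtain ⟨x, y⟩ := p
    simp only [nbrs, List.mem_cons, Prod.mk.injEq]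
    split_ifs <;> simp only [List.mem_cons, ih] <;> grind

theorem mem_nbrs_cons {es : List (ℕ × ℕ)} {x y a b : ℕ} :
    b ∈ nbrs ((x, y) :: es) a ↔ (a = x ∧ b = y) ∨ (a = y ∧ b = x) ∨ b ∈ nbrs es a := by
  simp only [mem_nbrs, List.mem_cons, Prod.mk.injEq]
  tauto

theorem nodup_nbrs_cons {es : List (ℕ × ℕ)} {x y : ℕ} (h : ∀ a, (nbrs es a).Nodup)
    (hxy : y ∉ nbrs es x) (a : ℕ) : (nbrs ((x, y) :: es) a).Nodup := by
  have hyx : x ∉ nbrs es y := by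
    rw [mem_nbrs] at hxy ⊢
    tauto
  simp only [nbrs]
  split_ifs with h₁ h₂
  · subst h₁
    exact List.nodup_cons.2 ⟨hxy, h _⟩
  · subst h₂
    exact List.nodup_cons.2 ⟨hyx, h _⟩
  · exact h a

section Labelling

variable {V : Type} {A : SimpleGraph V} {f : ℕ → V} {k : ℕ} {es : List (ℕ × ℕ)}

/-- The map `f` labels `k` distinct vertices of `A`, and the pairs in `es` are edges between
labelled vertices. -/
structure IsLabelling (A : SimpleGraph V) (f : ℕ → V) (k : ℕ) (es : List (ℕ × ℕ)) : Prop where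
  inj : ∀ a < k, ∀ b < k, f a = f b → a = b
  edge : ∀ a, ∀ b ∈ nbrs es a, a < k ∧ b < k ∧ A.Adj (f a) (f b)
  nodup : ∀ a, (nbrs es a).Nodup

/-- All neighbors of `f a` are accounted for by `es`. -/
def IsClosedAt (A : SimpleGraph V) (f : ℕ → V) (es : List (ℕ × ℕ)) (a : ℕ) : Prop :=
  ∀ w, A.Adj (f a) w → ∃ b ∈ nbrs es a, f b = w

theorem IsLabelling.add_edge (h : IsLabelling A f k es) {x y : ℕ} (hx : x < k) (hy : y < k)
    (hxy : y ∉ nbrs es x) (hadj : A.Adj (f x) (f y)) : IsLabelling A f k ((x, y) :: es) where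
  inj := h.inj
  edge a b hb := by
    rcases mem_nbrs_cons.1 hb with ⟨rfl, rfl⟩ | ⟨rfl, rfl⟩ | hb
    · exact ⟨hx, hy, hadj⟩
    · exact ⟨hy, hx, hadj.symm⟩
    · exact h.edge a b hb
  nodup := nodup_nbrs_cons h.nodup hxy

theorem IsLabelling.add_vertex (h : IsLabelling A f k es) {w : V} (hw : ∀ a < k, f a ≠ w) :
    IsLabelling A (Function.update f k w) (k + 1) es where
  inj a ha b hb hab := by
    rcases Nat.lt_succ_iff_lt_or_eq.1 ha with ha | rfl <;>
      rcases Nat.lt_succ_iff_lt_or_eq.1 hb with hb | rfl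
    · rw [Function.update_of_ne ha.ne, Function.update_of_ne hb.ne] at hab
      exact h.inj a ha b hb hab
    · rw [Function.update_of_ne ha.ne, Function.update_self] at hab
      exact absurd hab (hw a ha)
    · rw [Function.update_of_ne hb.ne, Function.update_self] at hab
      exact absurd hab.symm (hw b hb)
    · rfl
  edge a b hb := by
    obtain ⟨ha, hb, hadj⟩ := h.edge a b hb
    rw [Function.update_of_ne ha.ne, Function.update_of_ne hb.ne]
    exact ⟨ha.trans k.lt_succ_self, hb.trans k.lt_succ_self, hadj⟩
  nodup := h.nodup

theorem IsLabelling.card_le [Fintype V] (h : IsLabelling A f k es) : k ≤ Fintype.card V := by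
  rw [← Fintype.card_fin k]
  exact Fintype.card_le_of_injective (fun a : Fin k => f a)
    fun a b hab => Fin.ext (h.inj a a.2 b b.2 hab)

theorem IsClosedAt.mono {g : ℕ → V} {es' : List (ℕ × ℕ)} {a : ℕ} (h : IsClosedAt A f es a)
    (ha : g a = f a) (hg : ∀ b ∈ nbrs es a, b ∈ nbrs es' a ∧ g b = f b) :
    IsClosedAt A g es' a := by
  intro w hw
  rw [ha] at hw
  obtain ⟨b, hb, rfl⟩ := h w hw
  exact ⟨b, hg b hb⟩

theorem IsLabelling.card_map_nbrs (h : IsLabelling A f k es) (a : ℕ) :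
    ((nbrs es a).map f).toFinset.card = (nbrs es a).length := by
  rw [List.toFinset_card_of_nodup, List.length_map]
  exact (h.nodup a).map_on fun b hb c hc hbc =>
    h.inj b (h.edge a b hb).2.1 c (h.edge a c hc).2.1 hbc

variable [Fintype V]

theorem IsLabelling.map_nbrs_subset (h : IsLabelling A f k es) (a : ℕ) :
    ((nbrs es a).map f).toFinset ⊆ Finset.univ.filter (A.Adj (f a)) := by
  intro w hw
  simp only [List.mem_toFinset, List.mem_map] at hw
  obtain ⟨b, hb, rfl⟩ := hw
  simpa using (h.edge a b hb).2.2

theorem IsLabelling.length_eq_three_iff (h : IsLabelling A f k es)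
    (hA : ∀ v, (Finset.univ.filter (A.Adj v)).card = 3) (a : ℕ) :
    (nbrs es a).length = 3 ↔ IsClosedAt A f es a := by
  rw [← h.card_map_nbrs a]
  constructor
  · intro hl w hw
    have := Finset.eq_of_subset_of_card_le (h.map_nbrs_subset a) (by rw [hA, hl])
    have hw' : w ∈ ((nbrs es a).map f).toFinset := by
      rw [this]
      simpa using hw
    simpa using hw'
  · intro hcl
    rw [← hA (f a)]
    congr 1
    refine (h.map_nbrs_subset a).antisymm fun w hw => ?_
    simpa using hcl w (by simpa using hw)

theorem IsLabelling.length_lt_three (h : IsLabelling A f k es)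
    (hA : ∀ v, (Finset.univ.filter (A.Adj v)).card = 3) {a : ℕ} {w : V} (hw : A.Adj (f a) w)
    (hn : ∀ b ∈ nbrs es a, f b ≠ w) : (nbrs es a).length < 3 := by
  rw [← h.card_map_nbrs a, ← hA (f a)]
  refine Finset.card_lt_card ⟨h.map_nbrs_subset a, fun hsub => ?_⟩
  have := hsub (show w ∈ _ by simpa using hw)
  simp only [List.mem_toFinset, List.mem_map] at this
  obtain ⟨b, hb, hbw⟩ := this
  exact hn b hb hbw

/-- A successful exhaustive search reaches a complete labelling of every cubic graph compatible
with its starting point. -/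
theorem exists_leaf_of_search (hA : ∀ v, (Finset.univ.filter (A.Adj v)).card = 3)
    (hcard : Fintype.card V ≤ 10) (n : ℕ) :
    ∀ (k i j : ℕ) (es : List (ℕ × ℕ)) (f : ℕ → V), search n k i j es = true →
      IsLabelling A f k es → 0 < k → i ≤ k → (∀ a < i, IsClosedAt A f es a) →
      (i < k → ∀ a < j, a < k → A.Adj (f i) (f a) → a ∈ nbrs es i) →
      ∃ (k : ℕ) (es : List (ℕ × ℕ)) (f : ℕ → V), leafCheck k es = true ∧
        IsLabelling A f k es ∧ 0 < k ∧ ∀ a < k, IsClosedAt A f es a := by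
  induction n with
  | zero => intro k i j es f h; simp [search] at h
  | succ n ih =>
    intro k i j es f h hl hk hik hcl hj
    rw [search] at h
    split_ifs at h with h₁ h₂ h₃
    · subst h₁
      exact ⟨i, es, f, h, hl, hk, hcl⟩
    · have hi := (hl.length_eq_three_iff hA i).1 h₂
      have hcl' : ∀ a < i + 1, IsClosedAt A f es a := by
        intro a ha
        rcases Nat.lt_succ_iff_lt_or_eq.1 ha with ha | rfl
        exacts [hcl a ha, hi]
      refine ih k (i + 1) (i + 2) es f h hl hk (by omega) hcl' fun hik' a ha hak hadj => ?_
      rcases Nat.lt_succ_iff_lt_or_eq.1 ha with ha | rfl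
      · obtain ⟨b, hb, hbi⟩ := hcl' a ha _ hadj.symm
        obtain rfl := hl.inj b (hl.edge a b hb).2.1 (i + 1) hik' hbi
        exact mem_nbrs.2 (mem_nbrs.1 hb).symm
      · exact absurd hadj (A.irrefl)
    · have hik' : i < k := by omega
      obtain ⟨w, hw, hwn⟩ : ∃ w, A.Adj (f i) w ∧ ∀ b ∈ nbrs es i, f b ≠ w := by
        by_contra! hcon
        exact h₂ ((hl.length_eq_three_iff hA i).2 hcon)
      have hwk : ∀ a < k, f a ≠ w := by
        rintro a ha rfl
        exact hwn a (hj hik' a (by omega) ha hw) rfl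
      have hl' := hl.add_vertex hwk
      have hg : ∀ a < k, Function.update f k w a = f a :=
        fun a ha => Function.update_of_ne ha.ne _ _
      have hle := hl'.card_le
      have hkn : k ∉ nbrs es i := fun hm => absurd (hl.edge i k hm).2.1 (lt_irrefl k)
      rcases Bool.or_eq_true_iff.1 h with h | h
      · have := Nat.le_of_ble_eq_true h
        omega
      refine ih (k + 1) i (k + 1) _ _ h
        (hl'.add_edge (x := i) (y := k) (by omega) (by omega) hkn ?_) (by omega) (by omega)
        (fun a ha => (hcl a ha).mono (hg a (by omega)) fun b hb =>
          ⟨mem_nbrs_cons.2 (.inr (.inr hb)), hg b (hl.edge a b hb).2.1⟩) fun _ a ha _ hadj => ?_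
      · rw [hg i hik', Function.update_self]
        exact hw
      · rcases Nat.lt_succ_iff_lt_or_eq.1 ha with ha | rfl
        · rw [hg i hik', hg a ha] at hadj
          exact mem_nbrs_cons.2 (.inr (.inr (hj hik' a (by omega) ha hadj)))
        · exact mem_nbrs_cons.2 (.inl ⟨rfl, rfl⟩)
    · obtain ⟨hadd, hskip⟩ := Bool.and_eq_true_iff.1 h
      by_cases hij : A.Adj (f i) (f j) ∧ j ∉ nbrs es i
      · have hlt : (nbrs es j).length < 3 := by
          refine hl.length_lt_three hA hij.1.symm fun b hb hbi => hij.2 ?_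
          obtain rfl := hl.inj b (hl.edge j b hb).2.1 i (by omega) hbi
          exact mem_nbrs.2 (mem_nbrs.1 hb).symm
        rcases Bool.or_eq_true_iff.1 hadd with hadd | hadd
        · have := Nat.le_of_ble_eq_true hadd
          omega
        refine ih k i (j + 1) _ f hadd
          (hl.add_edge (x := i) (y := j) (by omega) (by omega) hij.2 hij.1) hk hik
          (fun a ha => (hcl a ha).mono rfl fun b hb =>
            ⟨mem_nbrs_cons.2 (.inr (.inr hb)), rfl⟩) fun hik' a ha hak hadj => ?_
        rcases Nat.lt_succ_iff_lt_or_eq.1 ha with ha | rfl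
        · exact mem_nbrs_cons.2 (.inr (.inr (hj hik' a ha hak hadj)))
        · exact mem_nbrs_cons.2 (.inl ⟨rfl, rfl⟩)
      · refine ih k i (j + 1) es f hskip hl hk hik hcl fun hik' a ha hak hadj => ?_
        rcases Nat.lt_succ_iff_lt_or_eq.1 ha with ha | rfl
        · exact hj hik' a ha hak hadj
        · by_contra hn
          exact hij ⟨hadj, hn⟩

end Labelling

theorem compatible_comm (x y : (ℕ × ℕ) × ℕ) : compatible x y = compatible y x := by
  unfold compatible
  grind

theorem exists_coloring_of_colorSearch (es : List (ℕ × ℕ)) :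
    ∀ done, colorSearch es done = true → ∃ cs : List ((ℕ × ℕ) × ℕ), cs.map Prod.fst = es ∧
      (∀ x ∈ cs, x.2 < 3) ∧ cs.Pairwise (fun x y => compatible x y = true) ∧
      ∀ x ∈ cs, ∀ y ∈ done, compatible x y = true := by
  induction es with
  | nil => intro done _; exact ⟨[], by simp⟩
  | cons e es ih =>
    intro done h
    simp only [colorSearch, List.any_eq_true, Bool.and_eq_true, List.all_eq_true] at h
    obtain ⟨c, hc, hdone, h⟩ := h
    obtain ⟨cs, hmap, hlt, hpw, hcd⟩ := ih _ h
    refine ⟨(e, c) :: cs, by simp [hmap], ?_, ?_, ?_⟩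
    · rintro x (_ | ⟨_, hx⟩)
      · simp only [List.mem_cons, List.not_mem_nil, or_false] at hc
        show c < 3
        omega
      · exact hlt x hx
    · refine List.pairwise_cons.2 ⟨fun x hx => ?_, hpw⟩
      rw [compatible_comm]
      exact hcd x hx _ List.mem_cons_self
    · rintro x (_ | ⟨_, hx⟩) y hy
      · exact hdone y hy
      · exact hcd x hx y (List.mem_cons_of_mem _ hy)

theorem exists_map_of_mapSearch {es t : List (ℕ × ℕ)} (n : ℕ) :
    ∀ m, mapSearch es t n m = true → ∃ m : List ℕ, m.length = 10 ∧ (∀ x ∈ m, x < 10) ∧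
      m.Nodup ∧ preserves es t m = true := by
  induction n with
  | zero =>
    intro m h
    simp only [mapSearch, Bool.and_eq_true, beq_iff_eq, List.all_eq_true, decide_eq_true_eq] at h
    exact ⟨m, h.1.1.2, h.1.2, h.2, h.1.1.1⟩
  | succ n ih =>
    intro m h
    simp only [mapSearch, List.any_eq_true, Bool.and_eq_true] at h
    obtain ⟨x, -, -, h⟩ := h
    exact ih _ h

end CubicSearch

namespace Multigraph

open CubicSearch

variable {G : Multigraph}

/-- The simple graph of adjacent vertices of a loopless multigraph. -/
def toSimpleGraph (G : Multigraph) (h : G.Loopless) : SimpleGraph G.V where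
  Adj u v := ∃ e, G.ends e = s(u, v)
  symm := ⟨fun u v ⟨e, he⟩ => ⟨e, he.trans Sym2.eq_swap⟩⟩
  loopless := ⟨fun u ⟨e, he⟩ => h e (by rw [he]; exact Sym2.mk_isDiag_iff.2 rfl)⟩

theorem Loopless.incCount_eq (h : G.Loopless) (v : G.V) (e : G.E) :
    G.incCount v e = if v ∈ G.ends e then 1 else 0 := by
  unfold incCount
  rw [if_neg]
  intro he
  exact h e (he ▸ Sym2.diag_isDiag v)

theorem Cubic.card_star (h : G.Cubic) (v : G.V) :
    (Finset.univ.filter fun e => v ∈ G.ends e).card = 3 := by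
  rw [Finset.card_filter, ← h.2 v]
  exact Finset.sum_congr rfl fun e _ => (h.1.incCount_eq v e).symm

theorem Cubic.card_neighbors (h : G.Cubic) (hs : G.Simple) (v : G.V) :
    (Finset.univ.filter ((G.toSimpleGraph hs.1).Adj v)).card = 3 := by
  rw [← h.card_star v]
  symm
  refine Finset.card_bij (fun e he => Sym2.Mem.other (Finset.mem_filter.1 he).2) ?_ ?_ ?_
  · intro e he
    exact Finset.mem_filter.2 ⟨Finset.mem_univ _, e, (Sym2.other_spec _).symm⟩
  · intro e he e' he' hee
    refine hs.2 e e' ?_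
    rw [← Sym2.other_spec (Finset.mem_filter.1 he).2, hee, Sym2.other_spec]
  · intro w hw
    obtain ⟨e, he⟩ := (Finset.mem_filter.1 hw).2
    have hv : v ∈ G.ends e := he ▸ Sym2.mem_mk_left v w
    refine ⟨e, by simpa using hv, ?_⟩
    exact Sym2.congr_right.1 ((Sym2.other_spec hv).trans he)

theorem Cubic.two_mul_card_edges (h : G.Cubic) :
    2 * Fintype.card G.E = 3 * Fintype.card G.V := by
  have h₁ : ∑ v : G.V, ∑ e : G.E, G.incCount v e = 3 * Fintype.card G.V :=
    (Finset.sum_congr rfl fun v _ => h.2 v).trans (by simp [mul_comm])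
  have h₂ : ∀ e : G.E, ∑ v : G.V, G.incCount v e = 2 := by
    intro e
    rw [← Sym2.card_toFinset_of_not_isDiag _ (h.1 e),
      Finset.sum_congr rfl fun v _ => h.1.incCount_eq v e, ← Finset.card_filter]
    congr 1
    ext v
    simp
  rw [← h₁, Finset.sum_comm, Finset.sum_congr rfl fun e _ => h₂ e]
  simp [mul_comm]

section Labelled

variable {f : ℕ → G.V} {k : ℕ} {es : List (ℕ × ℕ)}

theorem surjOn_of_isClosedAt (hconn : G.Connected) (hl : G.Loopless)
    (h : IsLabelling (G.toSimpleGraph hl) f k es) (hk : 0 < k)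
    (hcl : ∀ a < k, IsClosedAt (G.toSimpleGraph hl) f es a) (v : G.V) : ∃ a < k, f a = v := by
  induction hconn (f 0) v with
  | refl => exact ⟨0, hk, rfl⟩
  | tail _ hstep ih =>
    obtain ⟨a, ha, rfl⟩ := ih
    obtain ⟨e, -, he⟩ := hstep
    obtain ⟨b, hb, hbw⟩ := hcl a ha _ ⟨e, he⟩
    exact ⟨b, (h.edge a b hb).2.1, hbw⟩

theorem exists_pair_of_edge (hl : G.Loopless)
    (hcl : ∀ a < k, IsClosedAt (G.toSimpleGraph hl) f es a) (hsurj : ∀ v, ∃ a < k, f a = v)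
    (e : G.E) : ∃ p ∈ es, G.ends e = s(f p.1, f p.2) := by
  induction he : G.ends e with
  | _ u v =>
    obtain ⟨a, ha, rfl⟩ := hsurj u
    obtain ⟨b, hb, rfl⟩ := hcl a ha v ⟨e, he⟩
    rcases mem_nbrs.1 hb with hab | hba
    · exact ⟨_, hab, rfl⟩
    · exact ⟨_, hba, Sym2.eq_swap⟩

theorem exists_coloring_of_labelling (hs : G.Simple)
    (h : IsLabelling (G.toSimpleGraph hs.1) f k es)
    (hpair : ∀ e : G.E, ∃ p ∈ es, G.ends e = s(f p.1, f p.2))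
    (hcol : colorSearch es.reverse [] = true) :
    ∃ c : G.E → Fin 3, ∀ e e', G.EdgeAdj e e' → c e ≠ c e' := by
  obtain ⟨cs, hmap, hlt, hpw, -⟩ := exists_coloring_of_colorSearch es.reverse [] hcol
  have hx : ∀ e : G.E, ∃ x ∈ cs, G.ends e = s(f x.1.1, f x.1.2) := by
    intro e
    obtain ⟨p, hp, he⟩ := hpair e
    rw [← List.mem_reverse, ← hmap, List.mem_map] at hp
    obtain ⟨x, hx, rfl⟩ := hp
    exact ⟨x, hx, he⟩
  choose x hxcs hxe using hx
  refine ⟨fun e => ⟨(x e).2, hlt _ (hxcs e)⟩, ?_⟩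
  rintro e e' ⟨hne, v, hv, hv'⟩ hc
  have hxne : x e ≠ x e' := fun heq => hne (hs.2 e e' (by rw [hxe, hxe, heq]))
  have : Std.Symm fun x y => compatible x y = true :=
    ⟨fun a b hab => by rwa [compatible_comm]⟩
  have hcomp := hpw.forall (hxcs e) (hxcs e') hxne
  have hb : ∀ e, (x e).1.1 < k ∧ (x e).1.2 < k := by
    intro e
    have hm : (x e).1 ∈ es := List.mem_reverse.1 (hmap ▸ List.mem_map_of_mem (hxcs e))
    have := h.edge (x e).1.1 (x e).1.2 (mem_nbrs.2 (.inl hm))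
    exact ⟨this.1, this.2.1⟩
  have hc' : (x e).2 = (x e').2 := congrArg Fin.val hc
  rw [hxe, Sym2.mem_iff] at hv hv'
  have hshare : (x e).1.1 = (x e').1.1 ∨ (x e).1.1 = (x e').1.2 ∨
      (x e).1.2 = (x e').1.1 ∨ (x e).1.2 = (x e').1.2 := by
    rcases hv with hv | hv <;> rcases hv' with hv' | hv' <;> rw [hv] at hv'
    · exact .inl (h.inj _ (hb e).1 _ (hb e').1 hv')
    · exact .inr (.inl (h.inj _ (hb e).1 _ (hb e').2 hv'))
    · exact .inr (.inr (.inl (h.inj _ (hb e).2 _ (hb e').1 hv')))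
    · exact .inr (.inr (.inr (h.inj _ (hb e).2 _ (hb e').2 hv')))
  simp only [compatible, Bool.or_eq_true, bne_iff_ne, Bool.not_eq_true', Bool.or_eq_false_iff,
    beq_eq_false_iff_ne] at hcomp
  tauto

theorem isIsomorphicTo_of_mapSearch (hs : G.Simple) (hc : G.Cubic)
    (h : IsLabelling (G.toSimpleGraph hs.1) f 10 es)
    (hsurj : ∀ v, ∃ a < 10, f a = v)
    (hpair : ∀ e : G.E, ∃ p ∈ es, G.ends e = s(f p.1, f p.2))
    {H : Multigraph} (g : Fin 10 ≃ H.V) (hH : Fintype.card H.E = 15) {t : List (ℕ × ℕ)}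
    (ht : ∀ a b : Fin 10, (a.val, b.val) ∈ t → ∃ e, H.ends e = s(g a, g b))
    (hmap : mapSearch es t 10 [] = true) : G.IsIsomorphicTo H := by
  obtain ⟨m, hlen, hlt, hnd, hpres⟩ := exists_map_of_mapSearch 10 [] hmap
  let q : Fin 10 → Fin 10 := fun i => ⟨m[i.val]'(by omega), hlt _ (List.getElem_mem _)⟩
  have hq : Function.Injective q := fun i i' hii =>
    Fin.ext ((hnd.getElem_inj_iff).1 (congrArg Fin.val hii))
  have hf : Function.Bijective fun a : Fin 10 => f a :=
    ⟨fun a b hab => Fin.ext (h.inj a a.2 b b.2 hab),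
      fun v => let ⟨a, ha, hav⟩ := hsurj v; ⟨⟨a, ha⟩, hav⟩⟩
  let φ : G.V ≃ H.V := ((Equiv.ofBijective _ hf).symm.trans
    (Equiv.ofBijective q (Finite.injective_iff_bijective.1 hq))).trans g
  have hφ : ∀ a : Fin 10, φ (f a) = g (q a) := by
    intro a
    have : (Equiv.ofBijective _ hf).symm (f a) = a :=
      (Equiv.ofBijective _ hf).symm_apply_apply a
    simp only [φ, Equiv.trans_apply, this, Equiv.ofBijective_apply]
  have hmem : ∀ e, ∃ e', H.ends e' = (G.ends e).map φ := by
    intro e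
    obtain ⟨⟨a, b⟩, hp, he⟩ := hpair e
    obtain ⟨ha, hb, -⟩ := h.edge a b (mem_nbrs.2 (.inl hp))
    have hab := List.all_eq_true.1 hpres _ hp
    simp only [List.getElem?_eq_getElem (hlen ▸ ha : a < m.length),
      List.getElem?_eq_getElem (hlen ▸ hb : b < m.length), Bool.or_eq_true,
      List.contains_iff_mem] at hab
    rw [he, Sym2.map_mk]
    rw [show φ (f a) = g (q ⟨a, ha⟩) from hφ ⟨a, ha⟩,
      show φ (f b) = g (q ⟨b, hb⟩) from hφ ⟨b, hb⟩]
    rcases hab with hab | hab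
    · exact ht _ _ hab
    · rw [Sym2.eq_swap]
      exact ht _ _ hab
  choose ψ hψ using hmem
  have hψinj : Function.Injective ψ := fun e e' hee =>
    hs.2 e e' (Sym2.map.injective φ.injective (by rw [← hψ, hee, hψ]))
  have hcardV : Fintype.card G.V = 10 := by
    rw [Fintype.card_congr φ, ← Fintype.card_congr g, Fintype.card_fin]
  have hcardE : Fintype.card G.E = Fintype.card H.E := by
    have := hc.two_mul_card_edges
    omega
  exact ⟨⟨φ, Equiv.ofBijective ψ
    ((Fintype.bijective_iff_injective_and_card ψ).2 ⟨hψinj, hcardE⟩), hψ⟩⟩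

end Labelled

theorem isIsomorphicTo_petersen_or_sprime (hconn : G.Connected) (hs : G.Simple) (hc : G.Cubic)
    (hnc : ¬ ∃ c : G.E → Fin 3, ∀ e e', G.EdgeAdj e e' → c e ≠ c e')
    (hcard : Fintype.card G.V ≤ 10) : G.IsIsomorphicTo Petersen ∨ G.IsIsomorphicTo Sprime := by
  rcases isEmpty_or_nonempty G.V with hV | ⟨⟨v⟩⟩
  · have hE : IsEmpty G.E := ⟨fun e => hV.false (Quot.out (G.ends e)).1⟩
    exact absurd ⟨hE.elim, fun e => hE.elim e⟩ hnc
  obtain ⟨k, es, f, hleaf, hl, hk, hcl⟩ :=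
    exists_leaf_of_search (hc.card_neighbors hs) hcard 100 1 0 1 [] (fun _ => v) search_eq_true
      ⟨fun a ha b hb _ => by omega, by simp [nbrs], by simp [nbrs]⟩ one_pos zero_le_one
      (by simp) fun _ a ha _ hadj => absurd hadj (SimpleGraph.irrefl _)
  have hsurj := surjOn_of_isClosedAt hconn hs.1 hl hk hcl
  have hpair := exists_pair_of_edge hs.1 hcl hsurj
  simp only [leafCheck, Bool.or_eq_true, Bool.and_eq_true, beq_iff_eq] at hleaf
  rcases hleaf with hcol | ⟨rfl, hmap | hmap⟩
  · exact absurd (exists_coloring_of_labelling hs hl hpair hcol) hnc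
  · refine .inl (isIsomorphicTo_of_mapSearch hs hc hl hsurj hpair (Equiv.refl (Fin 10))
      (by decide +kernel) (fun a b hab => ⟨⟨s(a, b), ?_⟩, rfl⟩) hmap)
    revert a b
    decide +kernel
  · refine .inr (isIsomorphicTo_of_mapSearch hs hc hl hsurj hpair (Equiv.refl (Fin 10))
      (by decide +kernel) (fun a b hab => ⟨⟨s(a, b), ?_⟩, rfl⟩) hmap)
    revert a b
    decide +kernel

end Multigraph

/-- a connected non-3-edge-colorable simple cubic graph on at
most 10 vertices is the Petersen graph or the graph S'. -/
theorem non_three_edge_colorable_le_ten_is_petersen_or_sprime (G : Multigraph)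
    (hconn : G.Connected) (hs : G.Simple) (hc : G.Cubic)
    (hnc : ¬ ∃ c : G.E → Fin 3, ∀ e e', G.EdgeAdj e e' → c e ≠ c e')
    (hcard : Fintype.card G.V ≤ 10) :
    Multigraph.IsIsomorphicTo G Petersen ∨ Multigraph.IsIsomorphicTo G Sprime := by
  exact Multigraph.isIsomorphicTo_petersen_or_sprime hconn hs hc hnc hcard
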